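/- Let 0 < λ₁ < λ₂ < λ₃, set m = (λ₂² − λ₁²)/(λ₃² − λ₁²), h² = (λ₁² + λ₂² + λ₃²)/2, and μ(m) = E(m)/K(m). Then the normalization constant r² of the genus-1 condensate spectral flux density satisfies r² = (∫_{λ₁}^{λ₂} (y⁵ − h²y³)/√((y² − λ₁²)(λ₂² − y²)(λ₃² − y²)) dy) / (∫_{λ₁}^{λ₂} y/√((y² − λ₁²)(λ₂² − y²)(λ₃² − y²)) dy) = (1/6)·[λ₃²(λ₃² − λ₂² − λ₁²) − 2λ₁²λ₂² − (λ₁² + λ₂² + λ₃²)(λ₃² − λ₁²)·μ(m)]. -/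

import Mathlib

/-!
With `a = λ₁²`, `b = λ₂²`, `c = λ₃²`, the substitution `y² = a + (b - a) sin²θ` turns
`∫ f(y²) y/R̃(y) dy` over the s-gap into `(c - a)^{-1/2} ∫₀^{π/2} f(c - (c - a)Δ²)/Δ dθ`, where
`Δ = √(1 - m sin²θ)` (`gap_integral_eq`). Hence the denominator is `K(m)/√(c - a)` and the
numerator is a combination of the integrals of `Δ⁻¹`, `Δ`, `Δ³`, i.e. of `K(m)`, `E(m)` and
`∫ Δ³`. The last one is reduced to the first two by integrating the derivative of
`sin θ cos θ Δ` (`integral_delta_cube`).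
-/

/-- The complete elliptic integral of the first kind, `K(m) = ∫₀^{π/2} dθ/√(1 - m sin²θ)`. -/
noncomputable def ellipticK (m : ℝ) : ℝ :=
  ∫ θ in (0:ℝ)..(Real.pi / 2), 1 / Real.sqrt (1 - m * Real.sin θ ^ 2)

/-- The complete elliptic integral of the second kind, `E(m) = ∫₀^{π/2} √(1 - m sin²θ) dθ`. -/
noncomputable def ellipticE (m : ℝ) : ℝ :=
  ∫ θ in (0:ℝ)..(Real.pi / 2), Real.sqrt (1 - m * Real.sin θ ^ 2)

lemma delta_pos {m : ℝ} (hm0 : 0 ≤ m) (hm1 : m < 1) (θ : ℝ) :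
    0 < 1 - m * Real.sin θ ^ 2 := by
  nlinarith [Real.sin_sq_le_one θ, sq_nonneg (Real.sin θ)]

lemma continuous_sqrt_delta (m : ℝ) :
    Continuous fun θ : ℝ => Real.sqrt (1 - m * Real.sin θ ^ 2) := by
  fun_prop

lemma continuous_inv_sqrt_delta {m : ℝ} (hm0 : 0 ≤ m) (hm1 : m < 1) :
    Continuous fun θ : ℝ => 1 / Real.sqrt (1 - m * Real.sin θ ^ 2) :=
  continuous_const.div (continuous_sqrt_delta m)
    fun θ => (Real.sqrt_pos.2 (delta_pos hm0 hm1 θ)).ne'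

lemma ellipticK_pos {m : ℝ} (hm0 : 0 ≤ m) (hm1 : m < 1) : 0 < ellipticK m :=
  intervalIntegral.intervalIntegral_pos_of_pos
    ((continuous_inv_sqrt_delta hm0 hm1).intervalIntegrable _ _)
    (fun θ => one_div_pos.2 (Real.sqrt_pos.2 (delta_pos hm0 hm1 θ))) (by positivity)

lemma integral_delta_comb {m : ℝ} (hm0 : 0 ≤ m) (hm1 : m < 1) (A B C : ℝ) :
    (∫ θ in (0:ℝ)..(Real.pi / 2), (A * (1 / Real.sqrt (1 - m * Real.sin θ ^ 2))
        + B * Real.sqrt (1 - m * Real.sin θ ^ 2)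
        + C * Real.sqrt (1 - m * Real.sin θ ^ 2) ^ 3)) =
      A * ellipticK m + B * ellipticE m +
        C * ∫ θ in (0:ℝ)..(Real.pi / 2), Real.sqrt (1 - m * Real.sin θ ^ 2) ^ 3 := by
  have hc := continuous_sqrt_delta m
  have hi := continuous_inv_sqrt_delta hm0 hm1
  have hA : Continuous fun θ : ℝ => A * (1 / Real.sqrt (1 - m * Real.sin θ ^ 2)) :=
    hi.const_mul A
  have hB : Continuous fun θ : ℝ => B * Real.sqrt (1 - m * Real.sin θ ^ 2) := hc.const_mul B
  have hC : Continuous fun θ : ℝ => C * Real.sqrt (1 - m * Real.sin θ ^ 2) ^ 3 :=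
    (hc.pow 3).const_mul C
  have hAB : Continuous fun θ : ℝ => A * (1 / Real.sqrt (1 - m * Real.sin θ ^ 2))
      + B * Real.sqrt (1 - m * Real.sin θ ^ 2) := hA.add hB
  rw [intervalIntegral.integral_add (hAB.intervalIntegrable _ _) (hC.intervalIntegrable _ _),
    intervalIntegral.integral_add (hA.intervalIntegrable _ _) (hB.intervalIntegrable _ _)]
  simp only [intervalIntegral.integral_const_mul]
  rfl

/-- Reduction of `∫ Δ³` to `E(m)` and `K(m)`: the combination
`3Δ³ - (4 - 2m)Δ + (1 - m)/Δ` is the derivative of `m sin θ cos θ Δ`, which vanishes at both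
endpoints. -/
lemma integral_delta_cube {m : ℝ} (hm0 : 0 ≤ m) (hm1 : m < 1) :
    3 * ∫ θ in (0:ℝ)..(Real.pi / 2), Real.sqrt (1 - m * Real.sin θ ^ 2) ^ 3 =
      (4 - 2 * m) * ellipticE m - (1 - m) * ellipticK m := by
  have hc := continuous_sqrt_delta m
  have hi := continuous_inv_sqrt_delta hm0 hm1
  have hcube : Continuous fun θ : ℝ => Real.sqrt (1 - m * Real.sin θ ^ 2) ^ 3 := hc.pow 3
  have hder : ∀ θ : ℝ, HasDerivAt
      (fun θ => m * (Real.sin θ * Real.cos θ * Real.sqrt (1 - m * Real.sin θ ^ 2)))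
      (3 * Real.sqrt (1 - m * Real.sin θ ^ 2) ^ 3
        - (4 - 2 * m) * Real.sqrt (1 - m * Real.sin θ ^ 2)
        + (1 - m) * (1 / Real.sqrt (1 - m * Real.sin θ ^ 2))) θ := by
    intro θ
    have hp := delta_pos hm0 hm1 θ
    have hD : HasDerivAt (fun θ : ℝ => 1 - m * Real.sin θ ^ 2)
        (-(m * (2 * Real.sin θ * Real.cos θ))) θ := by
      have := (((Real.hasDerivAt_sin θ).pow 2).const_mul m).const_sub 1
      refine this.congr_deriv ?_
      push_cast
      ring
    have h := (((Real.hasDerivAt_sin θ).mul (Real.hasDerivAt_cos θ)).mul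
      (hD.sqrt hp.ne')).const_mul m
    refine h.congr_deriv ?_
    symm
    have hs := Real.sqrt_pos.2 hp
    have hsq := Real.sq_sqrt hp.le
    simp only [Pi.mul_apply]
    generalize Real.sqrt (1 - m * Real.sin θ ^ 2) = d at *
    have hcs := Real.cos_sq' θ
    field_simp
    have h4 : d ^ 4 = (1 - m * Real.sin θ ^ 2) ^ 2 := by rw [← hsq]; ring
    ring_nf
    simp only [h4, hsq, hcs]
    ring
  have hI := intervalIntegral.integral_eq_sub_of_hasDerivAt
    (a := 0) (b := Real.pi / 2) (fun θ _ => hder θ)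
    ((((hcube.const_mul 3).sub (hc.const_mul _)).add
      (hi.const_mul _)).intervalIntegrable _ _)
  have hcomb := integral_delta_comb hm0 hm1 (1 - m) (-(4 - 2 * m)) 3
  have hre : ∀ θ : ℝ, 3 * Real.sqrt (1 - m * Real.sin θ ^ 2) ^ 3
        - (4 - 2 * m) * Real.sqrt (1 - m * Real.sin θ ^ 2)
        + (1 - m) * (1 / Real.sqrt (1 - m * Real.sin θ ^ 2)) =
      (1 - m) * (1 / Real.sqrt (1 - m * Real.sin θ ^ 2))
        + -(4 - 2 * m) * Real.sqrt (1 - m * Real.sin θ ^ 2)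
        + 3 * Real.sqrt (1 - m * Real.sin θ ^ 2) ^ 3 := fun θ => by ring
  simp only [hre, Real.sin_zero, Real.cos_pi_div_two] at hI
  linarith

/-- The substitution `y² = λ₁² + (λ₂² - λ₁²) sin²θ` in an integral over the s-gap. No
integrability is needed, since the change of variables holds for arbitrary integrands. -/
lemma gap_integral_eq (l1 l2 l3 : ℝ) (h1 : 0 < l1) (h12 : l1 < l2) (h23 : l2 < l3)
    (f : ℝ → ℝ) :
    (∫ y in l1..l2, f (y ^ 2) * y /
        Real.sqrt ((y ^ 2 - l1 ^ 2) * (l2 ^ 2 - y ^ 2) * (l3 ^ 2 - y ^ 2))) =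
      (Real.sqrt (l3 ^ 2 - l1 ^ 2))⁻¹ * ∫ θ in (0:ℝ)..(Real.pi / 2),
        f (l1 ^ 2 + (l2 ^ 2 - l1 ^ 2) * Real.sin θ ^ 2) /
          Real.sqrt (1 - (l2 ^ 2 - l1 ^ 2) / (l3 ^ 2 - l1 ^ 2) * Real.sin θ ^ 2) := by
  have hab : 0 < l2 ^ 2 - l1 ^ 2 := by nlinarith
  have hca : 0 < l3 ^ 2 - l1 ^ 2 := by nlinarith
  have hcb : 0 < l3 ^ 2 - l2 ^ 2 := by nlinarith
  have hpi := Real.pi_pos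
  set q : ℝ → ℝ := fun θ => l1 ^ 2 + (l2 ^ 2 - l1 ^ 2) * Real.sin θ ^ 2 with hq
  set Y : ℝ → ℝ := fun θ => Real.sqrt (q θ) with hY
  have hqpos : ∀ θ, 0 < q θ := fun θ => by
    have := mul_nonneg hab.le (sq_nonneg (Real.sin θ))
    have := pow_pos h1 2
    simp only [hq]; linarith
  have hder : ∀ θ, HasDerivAt Y
      ((l2 ^ 2 - l1 ^ 2) * (Real.sin θ * Real.cos θ) / Y θ) θ := by
    intro θ
    have hd : HasDerivAt q ((l2 ^ 2 - l1 ^ 2) * (2 * Real.sin θ * Real.cos θ)) θ := by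
      have := (((Real.hasDerivAt_sin θ).pow 2).const_mul (l2 ^ 2 - l1 ^ 2)).const_add (l1 ^ 2)
      refine this.congr_deriv ?_
      push_cast
      ring
    convert hd.sqrt (hqpos θ).ne' using 1
    have := (Real.sqrt_pos.2 (hqpos θ)).ne'
    simp only [hY]
    field_simp
  have hmono : StrictMonoOn Y (Set.Icc 0 (Real.pi / 2)) := by
    intro s hs t ht hst
    refine Real.sqrt_lt_sqrt (hqpos s).le ?_
    have h0 : 0 ≤ Real.sin s := Real.sin_nonneg_of_nonneg_of_le_pi hs.1 (by linarith [hs.2])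
    have h2 : Real.sin s < Real.sin t :=
      Real.strictMonoOn_sin ⟨by linarith [hs.1], hs.2⟩ ⟨by linarith [ht.1], ht.2⟩ hst
    have h3 : Real.sin s ^ 2 < Real.sin t ^ 2 := by nlinarith
    simp only [hq]
    nlinarith
  have hY0 : Y 0 = l1 := by simp [hY, hq, Real.sqrt_sq h1.le]
  have hY1 : Y (Real.pi / 2) = l2 := by simp [hY, hq, Real.sqrt_sq (h1.trans h12).le]
  have hYc : Continuous Y := by simp only [hY, hq]; fun_prop
  have himg : Y '' Set.Ioo 0 (Real.pi / 2) = Set.Ioo l1 l2 := by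
    apply Set.Subset.antisymm
    · rintro _ ⟨θ, hθ, rfl⟩
      have hm : θ ∈ Set.Icc 0 (Real.pi / 2) := Set.Ioo_subset_Icc_self hθ
      exact ⟨hY0 ▸ hmono ⟨le_rfl, by positivity⟩ hm hθ.1,
        hY1 ▸ hmono hm ⟨by positivity, le_rfl⟩ hθ.2⟩
    · have := intermediate_value_Ioo (by positivity : (0:ℝ) ≤ Real.pi / 2) hYc.continuousOn
      rwa [hY0, hY1] at this
  rw [intervalIntegral.integral_of_le h12.le, MeasureTheory.integral_Ioc_eq_integral_Ioo,
    ← himg, MeasureTheory.integral_image_eq_integral_abs_deriv_smul measurableSet_Ioo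
      (fun θ _ => (hder θ).hasDerivWithinAt) (hmono.injOn.mono Set.Ioo_subset_Icc_self),
    ← intervalIntegral.integral_const_mul,
    intervalIntegral.integral_of_le (by positivity), MeasureTheory.integral_Ioc_eq_integral_Ioo]
  refine MeasureTheory.setIntegral_congr_fun measurableSet_Ioo fun θ hθ => ?_
  have hs : 0 < Real.sin θ := Real.sin_pos_of_pos_of_lt_pi hθ.1 (by linarith [hθ.2])
  have hc : 0 < Real.cos θ := Real.cos_pos_of_mem_Ioo ⟨by linarith [hθ.1], hθ.2⟩
  have hYp : 0 < Y θ := Real.sqrt_pos.2 (hqpos θ)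
  have hYsq : Y θ ^ 2 = q θ := Real.sq_sqrt (hqpos θ).le
  have hm1 : (l2 ^ 2 - l1 ^ 2) / (l3 ^ 2 - l1 ^ 2) < 1 := by
    rw [div_lt_one hca]; linarith
  have hD := delta_pos (div_pos hab hca).le hm1 θ
  have hR : Real.sqrt ((Y θ ^ 2 - l1 ^ 2) * (l2 ^ 2 - Y θ ^ 2) * (l3 ^ 2 - Y θ ^ 2)) =
      (l2 ^ 2 - l1 ^ 2) * (Real.sin θ * Real.cos θ) * (Real.sqrt (l3 ^ 2 - l1 ^ 2) *
        Real.sqrt (1 - (l2 ^ 2 - l1 ^ 2) / (l3 ^ 2 - l1 ^ 2) * Real.sin θ ^ 2)) := by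
    rw [← Real.sqrt_mul hca.le]
    have e : (Y θ ^ 2 - l1 ^ 2) * (l2 ^ 2 - Y θ ^ 2) * (l3 ^ 2 - Y θ ^ 2) =
        ((l2 ^ 2 - l1 ^ 2) * (Real.sin θ * Real.cos θ)) ^ 2 * ((l3 ^ 2 - l1 ^ 2) *
          (1 - (l2 ^ 2 - l1 ^ 2) / (l3 ^ 2 - l1 ^ 2) * Real.sin θ ^ 2)) := by
      rw [hYsq, mul_pow, mul_pow, Real.cos_sq']
      simp only [hq]
      field_simp
      ring
    rw [e, Real.sqrt_mul (sq_nonneg _), Real.sqrt_sq (by positivity)]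
  have hS := Real.sqrt_pos.2 hca
  have hT := Real.sqrt_pos.2 hD
  rw [smul_eq_mul, hR, abs_of_pos (by positivity), hYsq]
  simp only [hq]
  field_simp

/-- Normalization constant of the genus-1 condensate spectral flux density:
with `h² = (λ₁²+λ₂²+λ₃²)/2`, `m = (λ₂²-λ₁²)/(λ₃²-λ₁²)` and `μ(m) = E(m)/K(m)`,
`r² = (∫_{λ₁}^{λ₂} (y⁵-h²y³)/R̃ dy)/(∫_{λ₁}^{λ₂} y/R̃ dy)
    = (1/6)[λ₃²(λ₃²-λ₂²-λ₁²) - 2λ₁²λ₂² - (λ₁²+λ₂²+λ₃²)(λ₃²-λ₁²)μ(m)]`. -/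
theorem genus1_condensate_r_sq (l1 l2 l3 : ℝ)
    (h1 : 0 < l1) (h12 : l1 < l2) (h23 : l2 < l3) :
    (∫ y in l1..l2,
        (y ^ 5 - ((l1 ^ 2 + l2 ^ 2 + l3 ^ 2) / 2) * y ^ 3) /
          Real.sqrt ((y ^ 2 - l1 ^ 2) * (l2 ^ 2 - y ^ 2) * (l3 ^ 2 - y ^ 2))) /
      (∫ y in l1..l2,
        y / Real.sqrt ((y ^ 2 - l1 ^ 2) * (l2 ^ 2 - y ^ 2) * (l3 ^ 2 - y ^ 2))) =
      (1 / 6) *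
        (l3 ^ 2 * (l3 ^ 2 - l2 ^ 2 - l1 ^ 2) - 2 * l1 ^ 2 * l2 ^ 2 -
          (l1 ^ 2 + l2 ^ 2 + l3 ^ 2) * (l3 ^ 2 - l1 ^ 2) *
            (ellipticE ((l2 ^ 2 - l1 ^ 2) / (l3 ^ 2 - l1 ^ 2)) /
              ellipticK ((l2 ^ 2 - l1 ^ 2) / (l3 ^ 2 - l1 ^ 2)))) := by
  have hab : 0 < l2 ^ 2 - l1 ^ 2 := by nlinarith
  have hca : 0 < l3 ^ 2 - l1 ^ 2 := by nlinarith
  have hcb : 0 < l3 ^ 2 - l2 ^ 2 := by nlinarith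
  set m := (l2 ^ 2 - l1 ^ 2) / (l3 ^ 2 - l1 ^ 2) with hm
  have hm0 : 0 ≤ m := (div_pos hab hca).le
  have hm1 : m < 1 := by rw [hm, div_lt_one hca]; linarith
  have hmul : m * (l3 ^ 2 - l1 ^ 2) = l2 ^ 2 - l1 ^ 2 := div_mul_cancel₀ _ hca.ne'
  have hK := ellipticK_pos hm0 hm1
  have hS := Real.sqrt_pos.2 hca
  have hden := gap_integral_eq l1 l2 l3 h1 h12 h23 (fun _ => 1)
  have hnum := gap_integral_eq l1 l2 l3 h1 h12 h23
    (fun x => x ^ 2 - ((l1 ^ 2 + l2 ^ 2 + l3 ^ 2) / 2) * x)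
  simp only [one_mul, ← hm] at hden hnum
  have hcongr : ∀ y : ℝ, ((y ^ 2) ^ 2 - (l1 ^ 2 + l2 ^ 2 + l3 ^ 2) / 2 * y ^ 2) * y =
      y ^ 5 - (l1 ^ 2 + l2 ^ 2 + l3 ^ 2) / 2 * y ^ 3 := fun y => by ring
  simp only [hcongr] at hnum
  rw [hnum, hden]
  set p := l3 ^ 2 - l1 ^ 2 with hp
  set H := (l1 ^ 2 + l2 ^ 2 + l3 ^ 2) / 2 with hH
  -- In the variable θ, `y² = λ₃² - p Δ²`, so the integrand is a polynomial in `Δ²` divided by `Δ`.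
  have hint : ∀ θ : ℝ, ((l1 ^ 2 + (l2 ^ 2 - l1 ^ 2) * Real.sin θ ^ 2) ^ 2 -
        H * (l1 ^ 2 + (l2 ^ 2 - l1 ^ 2) * Real.sin θ ^ 2)) /
          Real.sqrt (1 - m * Real.sin θ ^ 2) =
      (l3 ^ 4 - H * l3 ^ 2) * (1 / Real.sqrt (1 - m * Real.sin θ ^ 2))
        + (H * p - 2 * l3 ^ 2 * p) * Real.sqrt (1 - m * Real.sin θ ^ 2)
        + p ^ 2 * Real.sqrt (1 - m * Real.sin θ ^ 2) ^ 3 := by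
    intro θ
    have hD := delta_pos hm0 hm1 θ
    have hx : l1 ^ 2 + (l2 ^ 2 - l1 ^ 2) * Real.sin θ ^ 2 =
        l3 ^ 2 - p * Real.sqrt (1 - m * Real.sin θ ^ 2) ^ 2 := by
      rw [Real.sq_sqrt hD.le, ← hmul, hp]; ring
    have hd := Real.sqrt_pos.2 hD
    rw [hx]
    field_simp
    ring
  simp only [hint]
  rw [integral_delta_comb hm0 hm1]
  have hJ := integral_delta_cube hm0 hm1
  have hJ' : (∫ θ in (0:ℝ)..(Real.pi / 2), Real.sqrt (1 - m * Real.sin θ ^ 2) ^ 3) =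
      ((4 - 2 * m) * ellipticE m - (1 - m) * ellipticK m) / 3 := by linarith
  rw [hJ']
  change _ / (_ * ellipticK m) = _
  have hmul2 : p ^ 2 * m = p * (l2 ^ 2 - l1 ^ 2) := by rw [← hmul]; ring
  generalize ellipticK m = K at *
  generalize ellipticE m = E at *
  rw [mul_div_mul_left _ _ (inv_pos.2 hS).ne']
  field_simp
  rw [hH]
  clear_value m
  simp only [hp] at hmul2 ⊢
  linear_combination (-12 * E + 6 * K) * hmul2
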